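/- Let H be a real Hilbert space and let f, g : H → ℝ ∪ {+∞} satisfy Assumptions A1–A2 (f, g proper, lower semicontinuous, convex, dom g ⊆ dom f, f Fréchet differentiable on an open set containing dom g, ∇f uniformly continuous on bounded subsets of dom g and mapping bounded subsets of dom g to bounded sets). Let (x^k) be generated by the forward-backward method with Linesearch 2: x⁰ ∈ dom g, θ ∈ (0,1); J_k = prox_g(x^k − ∇f(x^k)); β_k is the largest β ∈ {1, θ, θ², …} with (f+g)(x^k − β(x^k − J_k)) ≤ (f+g)(x^k) − β[g(x^k) − g(J_k)] − β⟨∇f(x^k), x^k − J_k⟩ + (β/2)‖x^k − J_k‖²; and x^{k+1} = x^k − β_k(x^k − J_k). If the set S* of minimizers of f+g is nonempty, then (x^k) is quasi-Fejér convergent to S* and converges weakly to a point of S*. -/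

import Mathlib

open Set Filter Topology Bornology RealInnerProductSpace

noncomputable section

variable {H : Type*} [NormedAddCommGroup H] [InnerProductSpace ℝ H] [CompleteSpace H]

/-- The effective domain of an extended-real-valued function. -/
def edom (h : H → EReal) : Set H := {x | h x < ⊤}

/-- `h` is a proper, lower semicontinuous, convex extended-real-valued function. -/
def ProperLscConvex (h : H → EReal) : Prop :=
  (∃ x, h x < ⊤) ∧ (∀ x, ⊥ < h x) ∧ LowerSemicontinuous h ∧
    ∀ x y : H, ∀ a b : ℝ, 0 ≤ a → 0 ≤ b → a + b = 1 →
      h (a • x + b • y) ≤ (a : EReal) * h x + (b : EReal) * h y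

/-- `p` is the proximal point `prox_{αg}(z)`, i.e. a minimizer of
`y ↦ g(y) + (1/(2α))‖y - z‖²` (such a minimizer is automatically unique). -/
def IsProxPt (g : H → EReal) (α : ℝ) (z p : H) : Prop :=
  ∀ y : H, g p + (((1 / (2 * α)) * ‖p - z‖ ^ 2 : ℝ) : EReal)
    ≤ g y + (((1 / (2 * α)) * ‖y - z‖ ^ 2 : ℝ) : EReal)

/-- `f` is Fréchet differentiable, with gradient `f'`, on an open set containing `s`
(in particular `f` is finite there). -/
def GradOnOpenSupset (f : H → EReal) (f' : H → H) (s : Set H) : Prop :=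
  ∃ U : Set H, IsOpen U ∧ s ⊆ U ∧
    ∀ x ∈ U, f x ≠ ⊤ ∧ HasGradientAt (fun y => (f y).toReal) (f' x) x

/-- Second half of Assumption A2: `f'` is uniformly continuous on bounded subsets of
`dom g` and maps bounded subsets of `dom g` to bounded sets. -/
def UCBddOnBounded (g : H → EReal) (f' : H → H) : Prop :=
  ∀ A : Set H, A ⊆ edom g → IsBounded A →
    UniformContinuousOn f' A ∧ IsBounded (f' '' A)

/-- The Linesearch-1 acceptance inequality at the point `x` with stepsize `α`. -/
def LS1 (f' : H → H) (J : H → ℝ → H) (δ : ℝ) (x : H) (α : ℝ) : Prop :=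
  α * ‖f' (J x α) - f' x‖ ≤ δ * ‖J x α - x‖

/-- `α` is the output of Linesearch 1 at `x`: the largest element of
`{σ, σθ, σθ², …}` satisfying the acceptance inequality. -/
def LS1Step (f' : H → H) (J : H → ℝ → H) (δ σ θ : ℝ) (x : H) (α : ℝ) : Prop :=
  ∃ n : ℕ, α = σ * θ ^ n ∧ LS1 f' J δ x α ∧
    ∀ m : ℕ, m < n → ¬ LS1 f' J δ x (σ * θ ^ m)

/-- The set of minimizers `S⁎` of `f + g` over `H`. -/
def argminSet (f g : H → EReal) : Set H := {x | ∀ y, f x + g x ≤ f y + g y}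

/-- The Linesearch-2 acceptance inequality at `x` (with `Jx = prox_g(x - ∇f(x))`)
with stepsize `β`. -/
def LS2Ineq (f g : H → EReal) (f' : H → H) (x Jx : H) (β : ℝ) : Prop :=
  f (x - β • (x - Jx)) + g (x - β • (x - Jx)) ≤
    f x + g x - (β : EReal) * (g x - g Jx)
      - ((β * ⟪f' x, x - Jx⟫ : ℝ) : EReal) + (((β / 2) * ‖x - Jx‖ ^ 2 : ℝ) : EReal)

/-- `v` belongs to the convex subdifferential `∂h(y)`. -/
def InSubdiff (h : H → EReal) (y v : H) : Prop :=
  ∀ z : H, ((⟪v, z - y⟫ : ℝ) : EReal) ≤ h z - h y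

/-- `h` is strongly convex with modulus `μ`. -/
def StrongConvexWith (h : H → EReal) (μ : ℝ) : Prop :=
  ∀ x y v : H, InSubdiff h y v →
    h y + ((⟪v, x - y⟫ : ℝ) : EReal) + (((μ / 2) * ‖x - y‖ ^ 2 : ℝ) : EReal) ≤ h x

/-!
Write `φ = f + g`. For a point `z` of `dom g`, the linesearch inequality, the optimality condition
of the proximal point and the gradient inequality of `f` add up to
`‖x (k + 1) - z‖ ^ 2 + 2 * b k * (φ (x k) - φ z) ≤ ‖x k - z‖ ^ 2 + 2 * (φ (x k) - φ (x (k + 1)))`.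
Since `φ (x k)` decreases, the last term telescopes, which gives quasi-Fejér convergence and
`b k * (φ (x k) - min φ) → 0`. Hence either `φ (x k) → min φ`, or `b k → 0`. In the second case the
trial stepsize `b k / θ` is eventually rejected at every step, and each rejection bounds
`‖x k - J k‖` by twice the variation of `∇f` between `x k` and the trial point; uniform continuity
of `∇f` then yields `x k - J k → 0` and `φ (J k) → min φ`. In both cases every weak cluster point
of `x` is a minimizer, and Opial's lemma concludes.
-/

section RealSequences

lemma exists_tendsto_of_succ_le_add_summable {a ε : ℕ → ℝ} (ha : BddBelow (range a))
    (hε : Summable ε) (h : ∀ k, a (k + 1) ≤ a k + ε k) : ∃ l, Tendsto a atTop (𝓝 l) := by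
  let s : ℕ → ℝ := fun k => ∑ i ∈ Finset.range k, ε i
  have hs : Tendsto s atTop (𝓝 (∑' i, ε i)) := hε.hasSum.tendsto_sum_nat
  have hanti : Antitone (a - s) := antitone_nat_of_succ_le fun k => by
    simp only [s, Pi.sub_apply, Finset.sum_range_succ]
    linarith [h k]
  have hbdd : BddBelow (range (a - s)) := by
    obtain ⟨A, hA⟩ := ha
    obtain ⟨B, hB⟩ := hs.bddAbove_range
    refine ⟨A - B, ?_⟩
    rintro _ ⟨k, rfl⟩
    exact sub_le_sub (hA ⟨k, rfl⟩) (hB ⟨k, rfl⟩)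
  exact ⟨_, by simpa using (tendsto_atTop_ciInf hanti hbdd).add hs⟩

lemma summable_sub_succ_of_antitone {a : ℕ → ℝ} (ha : Antitone a) (hb : BddBelow (range a)) :
    Summable fun k => a k - a (k + 1) := by
  obtain ⟨m, hm⟩ := hb
  refine summable_of_sum_range_le (c := a 0 - m)
    (fun k => sub_nonneg.2 (ha k.le_succ)) fun n => ?_
  rw [Finset.sum_range_sub']
  exact sub_le_sub_left (hm ⟨n, rfl⟩) _

end RealSequences

section NormedSpace

variable {ι V W : Type*} [NormedAddCommGroup V] [NormedAddCommGroup W]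

lemma tendsto_norm_sub_of_uniformContinuousOn {φ : V → W} {A : Set V}
    (hφ : UniformContinuousOn φ A) {l : Filter ι} {u v : ι → V} (hu : ∀ᶠ k in l, u k ∈ A)
    (hv : ∀ᶠ k in l, v k ∈ A) (huv : Tendsto (fun k => ‖u k - v k‖) l (𝓝 0)) :
    Tendsto (fun k => ‖φ (u k) - φ (v k)‖) l (𝓝 0) := by
  simp only [← dist_eq_norm] at huv ⊢
  have huv' : Tendsto (fun k => (u k, v k)) l (uniformity V ⊓ 𝓟 (A ×ˢ A)) :=
    tendsto_inf.2 ⟨tendsto_uniformity_iff_dist_tendsto_zero.2 huv,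
      tendsto_principal.2 (hu.and hv)⟩
  exact tendsto_uniformity_iff_dist_tendsto_zero.1 (Tendsto.comp hφ huv')

lemma le_add_of_isMinOn_add [NormedSpace ℝ V] {D : Set V} {G q : V → ℝ} {q' : V →L[ℝ] ℝ}
    {a y : V} (hG : ConvexOn ℝ D G) (hq : HasFDerivWithinAt q q' D a) (ha : a ∈ D)
    (hmin : IsMinOn (fun z => G z + q z) D a) (hy : y ∈ D) : G a ≤ G y + q' (y - a) := by
  let γ : ℝ → V := fun t => a + t • (y - a)
  let ψ : ℝ → ℝ := fun t => t * (G y - G a) + q (γ t)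
  have hγD : MapsTo γ (Icc 0 1) D := fun t ht => hG.1.add_smul_sub_mem ha hy ht
  have hγ0 : γ 0 = a := by simp [γ]
  have hγ : HasDerivWithinAt γ (y - a) (Icc 0 1) 0 :=
    ((((hasDerivAt_id (0 : ℝ)).smul_const (y - a)).const_add a).congr_deriv
      (one_smul ℝ _)).hasDerivWithinAt
  have hψ : HasDerivWithinAt ψ (G y - G a + q' (y - a)) (Icc 0 1) 0 := by
    have hlin := ((hasDerivAt_id (0 : ℝ)).mul_const (G y - G a)).hasDerivWithinAt (s := Icc 0 1)
    have hcomp := (hγ0 ▸ hq : HasFDerivWithinAt q q' D (γ 0)).comp_hasDerivWithinAt 0 hγ hγD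
    exact (hlin.add hcomp).congr_deriv (by rw [one_mul])
  have hψmin : IsMinOn ψ (Icc 0 1) 0 := fun t ht => by
    have hconv : G (γ t) ≤ G a + t * (G y - G a) := by
      have h := hG.2 ha hy (sub_nonneg.2 ht.2) ht.1 (sub_add_cancel 1 t)
      rw [show (1 - t) • a + t • y = γ t by module, smul_eq_mul, smul_eq_mul] at h
      linarith
    have hle : G a + q a ≤ G (γ t) + q (γ t) := hmin (hγD ht)
    simp only [mem_ofPred_eq, ψ, hγ0]
    linarith
  have hcone : (1 : ℝ) ∈ posTangentConeAt (Icc (0 : ℝ) 1) 0 :=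
    mem_posTangentConeAt_of_segment_subset (by simp [segment_eq_Icc])
  have hnonneg := hψmin.localize.hasFDerivWithinAt_nonneg hψ.hasFDerivWithinAt hcone
  simp only [ContinuousLinearMap.toSpanSingleton_apply, one_smul] at hnonneg
  linarith

end NormedSpace

section QuasiFejer

variable {V : Type*} [NormedAddCommGroup V]

/-- Quasi-Fejér convergence of the sequence `x` to the set `S`. -/
def QuasiFejer (S : Set V) (x : ℕ → V) : Prop :=
  ∀ z ∈ S, ∃ ε : ℕ → ℝ, (∀ k, 0 ≤ ε k) ∧ Summable ε ∧
    ∀ k, ‖x (k + 1) - z‖ ^ 2 ≤ ‖x k - z‖ ^ 2 + ε k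

variable {S : Set V} {x : ℕ → V}

lemma QuasiFejer.exists_tendsto_norm_sub (h : QuasiFejer S x) {z : V}
    (hz : z ∈ S) : ∃ a, Tendsto (fun k => ‖x k - z‖) atTop (𝓝 a) := by
  obtain ⟨ε, -, hε, hle⟩ := h z hz
  have hbdd : BddBelow (range fun k => ‖x k - z‖ ^ 2) :=
    ⟨0, forall_mem_range.2 fun k => sq_nonneg _⟩
  obtain ⟨a, ha⟩ := exists_tendsto_of_succ_le_add_summable hbdd hε hle
  exact ⟨√a, by simpa only [Real.sqrt_sq (norm_nonneg _)] using ha.sqrt⟩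

lemma QuasiFejer.isBounded_range (h : QuasiFejer S x)
    (hS : S.Nonempty) : IsBounded (range x) := by
  obtain ⟨z, hz⟩ := hS
  obtain ⟨a, ha⟩ := h.exists_tendsto_norm_sub hz
  obtain ⟨B, hB⟩ := ha.bddAbove_range
  refine (Metric.isBounded_closedBall (x := z) (r := B)).subset (range_subset_iff.2 fun k => ?_)
  exact mem_closedBall_iff_norm.2 (hB ⟨k, rfl⟩)

end QuasiFejer

section WeakConvergence

variable {ι E : Type*} [NormedAddCommGroup E] [InnerProductSpace ℝ E]

/-- Weak convergence of `u` to `p` along the filter `l`, tested against inner products. -/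
def TendstoWeakly (u : ι → E) (l : Filter ι) (p : E) : Prop :=
  ∀ y : E, Tendsto (fun k => ⟪u k, y⟫) l (𝓝 ⟪p, y⟫)

lemma TendstoWeakly.of_tendsto_sub {l : Filter ι} {u v : ι → E} {p : E}
    (hv : TendstoWeakly v l p) (huv : Tendsto (fun k => u k - v k) l (𝓝 0)) :
    TendstoWeakly u l p := fun y => by
  simpa [← inner_add_left] using
    (huv.inner (tendsto_const_nhds (x := y))).add (hv y)

lemma TendstoWeakly.mem_of_isClosed_of_convex [CompleteSpace E] {l : Filter ι} [l.NeBot]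
    {u : ι → E} {p : E} (hu : TendstoWeakly u l p) {C : Set E} (hC : Convex ℝ C)
    (hcl : IsClosed C) (hmem : ∀ᶠ k in l, u k ∈ C) : p ∈ C := by
  by_contra hp
  obtain ⟨T, c, hTp, hTC⟩ := geometric_hahn_banach_point_closed hC hcl hp
  have hrepr : ∀ v, ⟪v, (InnerProductSpace.toDual ℝ E).symm T⟫ = T v := fun v => by
    rw [real_inner_comm, InnerProductSpace.toDual_symm_apply]
  have hT : Tendsto (fun k => T (u k)) l (𝓝 (T p)) := by
    simpa only [hrepr] using hu ((InnerProductSpace.toDual ℝ E).symm T)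
  exact hTp.not_ge (ge_of_tendsto hT (hmem.mono fun k hk => (hTC _ hk).le))

lemma exists_tendstoWeakly_of_norm_le [CompleteSpace E] {x : ι → E} {R : ℝ} (U : Ultrafilter ι)
    (hR : ∀ᶠ k in U, ‖x k‖ ≤ R) : ∃ p, TendstoWeakly x U p := by
  let T : ι → WeakDual ℝ E := fun k => StrongDual.toWeakDual (InnerProductSpace.toDual ℝ E (x k))
  have hT : ∀ᶠ k in U, T k ∈ WeakDual.toStrongDual ⁻¹' Metric.closedBall (0 : StrongDual ℝ E) R :=
    hR.mono fun k hk => by simpa [T] using hk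
  obtain ⟨φ, -, hφ⟩ := (WeakDual.isCompact_closedBall (0 : StrongDual ℝ E) R).ultrafilter_le_nhds
    (U.map T) (le_principal_iff.2 hT)
  refine ⟨(InnerProductSpace.toDual ℝ E).symm (WeakDual.toStrongDual φ), fun y => ?_⟩
  rw [InnerProductSpace.toDual_symm_apply]
  exact ((WeakDual.eval_continuous y).tendsto φ).comp hφ

lemma TendstoWeakly.eq_of_tendsto_norm_sub {x : ι → E} {l l₁ l₂ : Filter ι} [l₁.NeBot] [l₂.NeBot]
    (hl₁ : l₁ ≤ l) (hl₂ : l₂ ≤ l) {p q : E} (hp : TendstoWeakly x l₁ p)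
    (hq : TendstoWeakly x l₂ q) {a c : ℝ} (ha : Tendsto (fun k => ‖x k - p‖) l (𝓝 a))
    (hc : Tendsto (fun k => ‖x k - q‖) l (𝓝 c)) : p = q := by
  have hlim : Tendsto (fun k => ⟪x k, p - q⟫) l
      (𝓝 ((‖p‖ ^ 2 - ‖q‖ ^ 2 - (a ^ 2 - c ^ 2)) / 2)) := by
    refine ((tendsto_const_nhds.sub ((ha.pow 2).sub (hc.pow 2))).div_const 2).congr fun k => ?_
    rw [norm_sub_sq_real, norm_sub_sq_real, inner_sub_right]
    ring
  have hinner : ⟪p, p - q⟫ = ⟪q, p - q⟫ :=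
    (tendsto_nhds_unique (hp _) (hlim.mono_left hl₁)).trans
      (tendsto_nhds_unique (hq _) (hlim.mono_left hl₂)).symm
  have hzero : ⟪p - q, p - q⟫ = 0 := by rw [inner_sub_left, hinner, sub_self]
  exact sub_eq_zero.1 (inner_self_eq_zero.1 hzero)

-- Opial's lemma
lemma exists_tendstoWeakly_of_tendsto_norm_sub [CompleteSpace E] {l : Filter ι} [l.NeBot]
    {x : ι → E} {S : Set E} (hS : S.Nonempty)
    (hdist : ∀ z ∈ S, ∃ a, Tendsto (fun k => ‖x k - z‖) l (𝓝 a))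
    (hclus : ∀ U : Ultrafilter ι, ↑U ≤ l → ∀ p, TendstoWeakly x U p → p ∈ S) :
    ∃ p ∈ S, TendstoWeakly x l p := by
  obtain ⟨R, hR⟩ : ∃ R, ∀ᶠ k in l, ‖x k‖ ≤ R := by
    obtain ⟨z, hz⟩ := hS
    obtain ⟨a, ha⟩ := hdist z hz
    refine ⟨a + 1 + ‖z‖, (ha.eventually_le_const (lt_add_one a)).mono fun k hk => ?_⟩
    linarith [norm_le_norm_sub_add (x k) z]
  have hweak : ∀ U : Ultrafilter ι, ↑U ≤ l → ∃ p ∈ S, TendstoWeakly x U p := fun U hU => by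
    obtain ⟨p, hp⟩ := exists_tendstoWeakly_of_norm_le U (hR.filter_mono hU)
    exact ⟨p, hclus U hU p hp, hp⟩
  obtain ⟨p, hpS, hp⟩ := hweak (Ultrafilter.of l) (Ultrafilter.of_le l)
  refine ⟨p, hpS, fun y => tendsto_iff_ultrafilter _ _ _ |>.2 fun U hU => ?_⟩
  obtain ⟨q, hqS, hq⟩ := hweak U hU
  obtain ⟨a, ha⟩ := hdist p hpS
  obtain ⟨c, hc⟩ := hdist q hqS
  rw [hp.eq_of_tendsto_norm_sub (Ultrafilter.of_le l) hU hq ha hc]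
  exact hq y

end WeakConvergence

section ForwardBackwardStep

variable {E : Type*} [NormedAddCommGroup E] [InnerProductSpace ℝ E]

/-- `f'` is a selection of subgradients of `F` relative to `D`: at each point of `D` the affine
function with slope `f'` supports `F` on `D`. -/
def IsSubgradientOn (F : E → ℝ) (f' : E → E) (D : Set E) : Prop :=
  ∀ x ∈ D, ∀ y ∈ D, F x + ⟪f' x, y - x⟫ ≤ F y

/-- `p` is the proximal point at `w` of the function equal to `G` on `D` and to `+∞` elsewhere. -/
def IsProxOn (G : E → ℝ) (D : Set E) (w p : E) : Prop :=
  p ∈ D ∧ IsMinOn (fun y => G y + 1 / 2 * ‖y - w‖ ^ 2) D p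

/-- The acceptance inequality of Linesearch 2 at `x`, with proximal point `J` and stepsize `β`, for
real-valued `F` and `G`. -/
def AcceptsStep (F G : E → ℝ) (f' : E → E) (x J : E) (β : ℝ) : Prop :=
  F (x - β • (x - J)) + G (x - β • (x - J)) ≤
    F x + G x - β * (G x - G J) - β * ⟪f' x, x - J⟫ + β / 2 * ‖x - J‖ ^ 2

variable {D : Set E} {F G : E → ℝ} {f' : E → E} {x J z w p : E} {β : ℝ}

-- Every point of `D` minimizes `F + (-F)`, whose optimality condition is the gradient inequality.
lemma isSubgradientOn_of_hasGradientWithinAt [CompleteSpace E] (hF : ConvexOn ℝ D F)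
    (hf' : ∀ x ∈ D, HasGradientWithinAt F (f' x) D x) : IsSubgradientOn F f' D := by
  intro x hx y hy
  have hmin : IsMinOn (fun z => F z + -F z) D x := fun z _ => by simp
  have h := le_add_of_isMinOn_add hF (hf' x hx).hasFDerivWithinAt.neg hx hmin hy
  rw [neg_apply, InnerProductSpace.toDual_apply_apply] at h
  linarith

lemma IsSubgradientOn.convexOn (h : IsSubgradientOn F f' D) (hD : Convex ℝ D) :
    ConvexOn ℝ D F := by
  refine ⟨hD, fun x hx y hy a b ha hb hab => ?_⟩
  set w := a • x + b • y
  have hwD : w ∈ D := hD hx hy ha hb hab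
  have hcancel : a * ⟪f' w, x - w⟫ + b * ⟪f' w, y - w⟫ = 0 := by
    have hzero : a • (x - w) + b • (y - w) = 0 := by
      rw [smul_sub, smul_sub, sub_add_sub_comm, ← add_smul, hab, one_smul, sub_self]
    rw [← inner_smul_right, ← inner_smul_right, ← inner_add_right, hzero, inner_zero_right]
  have hFw : F w = a * F w + b * F w := by rw [← add_mul, hab, one_mul]
  have hx' := mul_le_mul_of_nonneg_left (h w hwD x hx) ha
  have hy' := mul_le_mul_of_nonneg_left (h w hwD y hy) hb
  simp only [smul_eq_mul]
  linarith

lemma IsProxOn.add_inner_le (hp : IsProxOn G D w p) (hG : ConvexOn ℝ D G) (hz : z ∈ D) :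
    G p + ⟪w - p, z - p⟫ ≤ G z := by
  have hq : HasFDerivWithinAt (fun y => 1 / 2 * ‖y - w‖ ^ 2) (innerSL ℝ (p - w)) D p := by
    have h := ((hasFDerivAt_id p).sub_const w).norm_sq.const_mul (1 / 2)
    refine h.hasFDerivWithinAt.congr_fderiv (ContinuousLinearMap.ext fun v => ?_)
    simp
  have h := le_add_of_isMinOn_add hG hq hp.1 hp.2 hz
  rw [innerSL_apply_apply, ← neg_sub w p, inner_neg_left] at h
  linarith

lemma IsProxOn.norm_sub_le {w₁ w₂ p₁ p₂ : E} (h₁ : IsProxOn G D w₁ p₁) (h₂ : IsProxOn G D w₂ p₂)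
    (hG : ConvexOn ℝ D G) : ‖p₁ - p₂‖ ≤ ‖w₁ - w₂‖ := by
  have hfirm : ‖p₁ - p₂‖ ^ 2 ≤ ⟪w₁ - w₂, p₁ - p₂⟫ := by
    have hexpand : ⟪w₁ - p₁, p₂ - p₁⟫ + ⟪w₂ - p₂, p₁ - p₂⟫ =
        ‖p₁ - p₂‖ ^ 2 - ⟪w₁ - w₂, p₁ - p₂⟫ := by
      rw [← real_inner_self_eq_norm_sq]
      simp only [inner_sub_left, inner_sub_right]
      ring
    linarith [h₁.add_inner_le hG h₂.1, h₂.add_inner_le hG h₁.1]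
  have hle : ‖p₁ - p₂‖ * ‖p₁ - p₂‖ ≤ ‖w₁ - w₂‖ * ‖p₁ - p₂‖ := by
    rw [← sq]
    exact hfirm.trans (real_inner_le_norm _ _)
  rcases (norm_nonneg (p₁ - p₂)).eq_or_lt with hzero | hpos
  · exact hzero ▸ norm_nonneg _
  · exact le_of_mul_le_mul_right hle hpos

lemma AcceptsStep.value_le (hacc : AcceptsStep F G f' x J β) (hJ : IsProxOn G D (x - f' x) J)
    (hG : ConvexOn ℝ D G) (hx : x ∈ D) (hβ : 0 ≤ β) :
    F (x - β • (x - J)) + G (x - β • (x - J)) ≤ F x + G x - β / 2 * ‖x - J‖ ^ 2 := by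
  have hprox : G J + (‖x - J‖ ^ 2 - ⟪f' x, x - J⟫) ≤ G x := by
    rw [← real_inner_self_eq_norm_sq, ← inner_sub_left, sub_right_comm]
    exact hJ.add_inner_le hG hx
  unfold AcceptsStep at hacc
  linarith [mul_le_mul_of_nonneg_left hprox hβ]

lemma AcceptsStep.norm_sub_sq_le (hacc : AcceptsStep F G f' x J β)
    (hJ : IsProxOn G D (x - f' x) J) (hG : ConvexOn ℝ D G) (hf' : IsSubgradientOn F f' D)
    (hx : x ∈ D) (hz : z ∈ D) (hβ₀ : 0 ≤ β) (hβ₁ : β ≤ 1) :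
    ‖x - β • (x - J) - z‖ ^ 2 + 2 * (β * (F x + G x - (F z + G z))) ≤
      ‖x - z‖ ^ 2 + 2 * (F x + G x - (F (x - β • (x - J)) + G (x - β • (x - J)))) := by
  have hexpand : ‖x - β • (x - J) - z‖ ^ 2 =
      ‖x - z‖ ^ 2 - 2 * (β * ⟪x - J, x - z⟫) + β ^ 2 * ‖x - J‖ ^ 2 := by
    rw [sub_right_comm, norm_sub_sq_real, inner_smul_right, norm_smul, mul_pow, Real.norm_eq_abs,
      sq_abs, real_inner_comm]
  have hsubgrad : G J + F x + (‖x - J‖ ^ 2 - ⟪x - J, x - z⟫ - ⟪f' x, x - J⟫) ≤ F z + G z := by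
    have hinner : ⟪x - f' x - J, z - J⟫ + ⟪f' x, z - x⟫ =
        ‖x - J‖ ^ 2 - ⟪x - J, x - z⟫ - ⟪f' x, x - J⟫ := by
      rw [← real_inner_self_eq_norm_sq]
      simp only [inner_sub_left, inner_sub_right]
      ring
    linarith [hJ.add_inner_le hG hz, hf' x hx z hz]
  have hβsq : β ^ 2 * ‖x - J‖ ^ 2 ≤ β * ‖x - J‖ ^ 2 :=
    mul_le_mul_of_nonneg_right (pow_le_of_le_one hβ₀ hβ₁ two_ne_zero) (sq_nonneg _)
  unfold AcceptsStep at hacc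
  linarith [mul_le_mul_of_nonneg_left hsubgrad hβ₀]

lemma sub_smul_sub_mem_of_convex (hD : Convex ℝ D) (hx : x ∈ D) (hJ : J ∈ D) (hβ : β ∈ Icc 0 1) :
    x - β • (x - J) ∈ D := by
  simpa [sub_eq_add_neg, ← smul_neg] using hD.add_smul_sub_mem hx hJ hβ

lemma norm_sub_le_of_not_acceptsStep (hrej : ¬AcceptsStep F G f' x J β) (hG : ConvexOn ℝ D G)
    (hf' : IsSubgradientOn F f' D) (hx : x ∈ D) (hJ : J ∈ D) (hβ₀ : 0 < β) (hβ₁ : β ≤ 1) :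
    ‖x - J‖ ≤ 2 * ‖f' x - f' (x - β • (x - J))‖ := by
  set y := x - β • (x - J)
  have hyD : y ∈ D := sub_smul_sub_mem_of_convex hG.1 hx hJ ⟨hβ₀.le, hβ₁⟩
  have hGy : G y ≤ (1 - β) * G x + β * G J := by
    have h := hG.2 hx hJ (sub_nonneg.2 hβ₁) hβ₀.le (sub_add_cancel 1 β)
    rwa [show (1 - β) • x + β • J = y by module] at h
  have hFy : F y + β * ⟪f' y, x - J⟫ ≤ F x := by
    have h := hf' y hyD x hx
    rwa [sub_sub_cancel, inner_smul_right] at h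
  have hinner : ‖x - J‖ ^ 2 / 2 < ⟪f' x - f' y, x - J⟫ := by
    rw [inner_sub_left]
    refine lt_of_mul_lt_mul_left ?_ hβ₀.le
    unfold AcceptsStep at hrej
    linarith
  by_contra! hlt
  have hcs := real_inner_le_norm (f' x - f' y) (x - J)
  have hprod := mul_le_mul_of_nonneg_right hlt.le (norm_nonneg (x - J))
  linarith

lemma IsProxOn.value_sub_le (hJ : IsProxOn G D (x - f' x) J) (hG : ConvexOn ℝ D G)
    (hf' : IsSubgradientOn F f' D) (hz : z ∈ D) :
    F J + G J - (F z + G z) ≤ (‖x - J‖ + ‖f' x - f' J‖) * ‖J - z‖ := by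
  have hinner : ⟪x - f' x - J, z - J⟫ + ⟪f' J, z - J⟫ = ⟪x - J - (f' x - f' J), z - J⟫ := by
    rw [← inner_add_left]
    congr 1
    abel
  have hcs : -⟪x - J - (f' x - f' J), z - J⟫ ≤ ‖x - J - (f' x - f' J)‖ * ‖J - z‖ := by
    rw [← inner_neg_right, neg_sub]
    exact real_inner_le_norm _ _
  have hnorm := mul_le_mul_of_nonneg_right (_root_.norm_sub_le (x - J) (f' x - f' J))
    (norm_nonneg (J - z))
  linarith [hJ.add_inner_le hG hz, hf' J hJ.1 z hz]

end ForwardBackwardStep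

section ForwardBackwardSequence

variable {E : Type*} [NormedAddCommGroup E] [InnerProductSpace ℝ E]

/-- The set of points of `D` at which `φ` attains its minimum over `D`. -/
def minimizersOn (φ : E → ℝ) (D : Set E) : Set E := {z | z ∈ D ∧ IsMinOn φ D z}

/-- The iterates `x`, proximal points `J` and stepsizes `b` of the forward-backward method with
Linesearch 2 for `F + G` on `D`. The maximality of `b k` among the powers of `θ` enters only through
the rejection of the preceding trial stepsize `b k / θ`. -/
structure IsForwardBackward (F G : E → ℝ) (f' : E → E) (D : Set E) (θ : ℝ) (x J : ℕ → E)
    (b : ℕ → ℝ) : Prop where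
  mem : ∀ k, x k ∈ D
  isProxOn : ∀ k, IsProxOn G D (x k - f' (x k)) (J k)
  step_pos : ∀ k, 0 < b k
  step_le_one : ∀ k, b k ≤ 1
  accepts : ∀ k, AcceptsStep F G f' (x k) (J k) (b k)
  rejects : ∀ k, b k < 1 → b k / θ ≤ 1 ∧ ¬AcceptsStep F G f' (x k) (J k) (b k / θ)
  succ_eq : ∀ k, x (k + 1) = x k - b k • (x k - J k)

namespace IsForwardBackward

variable {F G : E → ℝ} {f' : E → E} {D : Set E} {θ : ℝ} {x J : ℕ → E} {b : ℕ → ℝ} {z : E}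

lemma antitone_value (h : IsForwardBackward F G f' D θ x J b) (hG : ConvexOn ℝ D G) :
    Antitone fun k => F (x k) + G (x k) := antitone_nat_of_succ_le fun k => by
  have hle := (h.accepts k).value_le (h.isProxOn k) hG (h.mem k) (h.step_pos k).le
  rw [← h.succ_eq] at hle
  have hnonneg : 0 ≤ b k / 2 * ‖x k - J k‖ ^ 2 := by
    have := h.step_pos k
    positivity
  linarith

lemma bddBelow_value (h : IsForwardBackward F G f' D θ x J b)
    (hz : z ∈ minimizersOn (fun y => F y + G y) D) :
    BddBelow (range fun k => F (x k) + G (x k)) :=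
  ⟨F z + G z, forall_mem_range.2 fun k => hz.2 (h.mem k)⟩

lemma norm_succ_sub_sq_le (h : IsForwardBackward F G f' D θ x J b) (hG : ConvexOn ℝ D G)
    (hf' : IsSubgradientOn F f' D) (hz : z ∈ D) (k : ℕ) :
    ‖x (k + 1) - z‖ ^ 2 + 2 * (b k * (F (x k) + G (x k) - (F z + G z))) ≤
      ‖x k - z‖ ^ 2 + 2 * (F (x k) + G (x k) - (F (x (k + 1)) + G (x (k + 1)))) := by
  rw [h.succ_eq]
  exact (h.accepts k).norm_sub_sq_le (h.isProxOn k) hG hf' (h.mem k) hz (h.step_pos k).le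
    (h.step_le_one k)

lemma quasiFejer (h : IsForwardBackward F G f' D θ x J b) (hG : ConvexOn ℝ D G)
    (hf' : IsSubgradientOn F f' D) : QuasiFejer (minimizersOn (fun y => F y + G y) D) x := by
  intro z hz
  refine ⟨fun k => 2 * (F (x k) + G (x k) - (F (x (k + 1)) + G (x (k + 1)))), fun k => ?_, ?_,
    fun k => ?_⟩
  · exact mul_nonneg zero_le_two (sub_nonneg.2 (h.antitone_value hG k.le_succ))
  · exact (summable_sub_succ_of_antitone (h.antitone_value hG) (h.bddBelow_value hz)).mul_left 2
  · have hgap : 0 ≤ b k * (F (x k) + G (x k) - (F z + G z)) :=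
      mul_nonneg (h.step_pos k).le (sub_nonneg.2 (hz.2 (h.mem k)))
    linarith [h.norm_succ_sub_sq_le hG hf' hz.1 k]

lemma tendsto_step_mul_value_sub (h : IsForwardBackward F G f' D θ x J b) (hG : ConvexOn ℝ D G)
    (hf' : IsSubgradientOn F f' D) (hz : z ∈ minimizersOn (fun y => F y + G y) D) :
    Tendsto (fun k => b k * (F (x k) + G (x k) - (F z + G z))) atTop (𝓝 0) := by
  obtain ⟨a, ha⟩ := (h.quasiFejer hG hf').exists_tendsto_norm_sub hz
  have hdist : Tendsto (fun k => (‖x k - z‖ ^ 2 - ‖x (k + 1) - z‖ ^ 2) / 2) atTop (𝓝 0) := by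
    simpa using
      ((ha.pow 2).sub ((ha.pow 2).comp (tendsto_add_atTop_nat 1))).div_const 2
  have hvalue :=
    (summable_sub_succ_of_antitone (h.antitone_value hG) (h.bddBelow_value hz)).tendsto_atTop_zero
  refine squeeze_zero (fun k => mul_nonneg (h.step_pos k).le (sub_nonneg.2 (hz.2 (h.mem k))))
    (fun k => ?_) (add_zero (0 : ℝ) ▸ hdist.add hvalue)
  linarith [h.norm_succ_sub_sq_le hG hf' hz.1 k]

lemma tendsto_value_or_tendsto_step_zero (h : IsForwardBackward F G f' D θ x J b)
    (hG : ConvexOn ℝ D G) (hf' : IsSubgradientOn F f' D)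
    (hz : z ∈ minimizersOn (fun y => F y + G y) D) :
    Tendsto (fun k => F (x k) + G (x k)) atTop (𝓝 (F z + G z)) ∨ Tendsto b atTop (𝓝 0) := by
  obtain ⟨L, hL⟩ : ∃ L, Tendsto (fun k => F (x k) + G (x k)) atTop (𝓝 L) :=
    ⟨_, tendsto_atTop_ciInf (h.antitone_value hG) (h.bddBelow_value hz)⟩
  have hzL : F z + G z ≤ L := ge_of_tendsto' hL fun k => hz.2 (h.mem k)
  rcases hzL.eq_or_lt with heq | hlt
  · exact .inl (heq ▸ hL)
  · have hgap : L - (F z + G z) ≠ 0 := (sub_pos.2 hlt).ne'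
    have hdiv := (h.tendsto_step_mul_value_sub hG hf' hz).div (hL.sub_const (F z + G z)) hgap
    rw [zero_div] at hdiv
    refine .inr (hdiv.congr fun k => mul_div_cancel_right₀ _ (sub_pos.2 ?_).ne')
    exact hlt.trans_le ((h.antitone_value hG).le_of_tendsto hL k)

lemma isBounded_range_prox (h : IsForwardBackward F G f' D θ x J b) (hG : ConvexOn ℝ D G)
    (hx : IsBounded (range x)) (hf'x : IsBounded (f' '' range x)) : IsBounded (range J) := by
  have hforward : IsBounded (range fun k => x k - f' (x k)) :=
    (hx.sub hf'x).subset (range_subset_iff.2 fun k =>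
      sub_mem_sub (mem_range_self k) (mem_image_of_mem f' (mem_range_self k)))
  obtain ⟨C, hC⟩ := Metric.isBounded_range_iff.1 hforward
  refine Metric.isBounded_range_iff.2 ⟨C, fun i j => ?_⟩
  rw [dist_eq_norm]
  exact ((h.isProxOn i).norm_sub_le (h.isProxOn j) hG).trans (dist_eq_norm (x i - _) _ ▸ hC i j)

lemma exists_convex_isBounded_superset (h : IsForwardBackward F G f' D θ x J b)
    (hD : Convex ℝ D) (hx : IsBounded (range x)) (hJ : IsBounded (range J)) :
    ∃ A ⊆ D, Convex ℝ A ∧ IsBounded A ∧ (∀ k, x k ∈ A) ∧ ∀ k, J k ∈ A := by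
  have hsub := subset_convexHull ℝ (range x ∪ range J)
  refine ⟨convexHull ℝ (range x ∪ range J), convexHull_min (union_subset ?_ ?_) hD,
    convex_convexHull ℝ _, isBounded_convexHull.2 (hx.union hJ),
    fun k => hsub (.inl ⟨k, rfl⟩), fun k => hsub (.inr ⟨k, rfl⟩)⟩
  · exact range_subset_iff.2 h.mem
  · exact range_subset_iff.2 fun k => (h.isProxOn k).1

lemma tendsto_norm_sub_prox (h : IsForwardBackward F G f' D θ x J b) (hG : ConvexOn ℝ D G)
    (hf' : IsSubgradientOn F f' D) (hθ : 0 < θ) (hb : Tendsto b atTop (𝓝 0)) {A : Set E}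
    (hA : Convex ℝ A) (hAb : IsBounded A) (hf'A : UniformContinuousOn f' A)
    (hxA : ∀ k, x k ∈ A) (hJA : ∀ k, J k ∈ A) :
    Tendsto (fun k => ‖x k - J k‖) atTop (𝓝 0) := by
  let y : ℕ → E := fun k => x k - (b k / θ) • (x k - J k)
  have hrej : ∀ᶠ k in atTop, b k / θ ≤ 1 ∧ ¬AcceptsStep F G f' (x k) (J k) (b k / θ) :=
    (hb.eventually_lt_const one_pos).mono h.rejects
  have hpos : ∀ k, 0 < b k / θ := fun k => div_pos (h.step_pos k) hθ
  have hyA : ∀ᶠ k in atTop, y k ∈ A := hrej.mono fun k hk =>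
    sub_smul_sub_mem_of_convex hA (hxA k) (hJA k) ⟨(hpos k).le, hk.1⟩
  have hxy : Tendsto (fun k => ‖x k - y k‖) atTop (𝓝 0) := by
    obtain ⟨C, hC⟩ := Metric.isBounded_iff.1 hAb
    have hbC : Tendsto (fun k => b k / θ * C) atTop (𝓝 0) := by
      simpa using (hb.div_const θ).mul_const C
    refine squeeze_zero (fun k => norm_nonneg _) (fun k => ?_) hbC
    rw [sub_sub_cancel, norm_smul, Real.norm_of_nonneg (hpos k).le, ← dist_eq_norm]
    exact mul_le_mul_of_nonneg_left (hC (hxA k) (hJA k)) (hpos k).le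
  have hgrad := tendsto_norm_sub_of_uniformContinuousOn hf'A (.of_forall hxA) hyA hxy
  refine squeeze_zero' (.of_forall fun k => norm_nonneg _) (hrej.mono fun k hk => ?_)
    (mul_zero (2 : ℝ) ▸ hgrad.const_mul 2)
  exact norm_sub_le_of_not_acceptsStep hk.2 hG hf' (h.mem k) (h.isProxOn k).1 (hpos k) hk.1

lemma tendsto_value_prox (h : IsForwardBackward F G f' D θ x J b) (hG : ConvexOn ℝ D G)
    (hf' : IsSubgradientOn F f' D) (hz : z ∈ minimizersOn (fun y => F y + G y) D)
    (hJ : IsBounded (range J)) (hxJ : Tendsto (fun k => ‖x k - J k‖) atTop (𝓝 0))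
    (hf'xJ : Tendsto (fun k => ‖f' (x k) - f' (J k)‖) atTop (𝓝 0)) :
    Tendsto (fun k => F (J k) + G (J k)) atTop (𝓝 (F z + G z)) := by
  obtain ⟨C, hC⟩ := hJ.subset_closedBall z
  have hgap : Tendsto (fun k => F z + G z + (‖x k - J k‖ + ‖f' (x k) - f' (J k)‖) * C) atTop
      (𝓝 (F z + G z)) := by
    simpa using ((hxJ.add hf'xJ).mul_const C).const_add (F z + G z)
  refine tendsto_of_tendsto_of_tendsto_of_le_of_le tendsto_const_nhds hgap
    (fun k => hz.2 (h.isProxOn k).1) fun k => sub_le_iff_le_add'.1 ?_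
  have hJz : ‖J k - z‖ ≤ C := mem_closedBall_iff_norm.1 (hC ⟨k, rfl⟩)
  exact ((h.isProxOn k).value_sub_le hG hf' hz.1).trans
    (mul_le_mul_of_nonneg_left hJz (by positivity))

-- If the stepsizes do not vanish, the iterates themselves are minimizing; otherwise the rejected
-- trial steps force `x k - J k → 0` and the proximal points are minimizing.
lemma exists_minimizing_of_tendsto_sub (h : IsForwardBackward F G f' D θ x J b)
    (hG : ConvexOn ℝ D G) (hf' : IsSubgradientOn F f' D) (hθ : 0 < θ)
    (hA : ∀ A ⊆ D, IsBounded A → UniformContinuousOn f' A ∧ IsBounded (f' '' A))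
    (hz : z ∈ minimizersOn (fun y => F y + G y) D) :
    ∃ u : ℕ → E, (∀ k, u k ∈ D) ∧ Tendsto (fun k => u k - x k) atTop (𝓝 0) ∧
      Tendsto (fun k => F (u k) + G (u k)) atTop (𝓝 (F z + G z)) := by
  rcases h.tendsto_value_or_tendsto_step_zero hG hf' hz with hvalue | hb
  · exact ⟨x, h.mem, by simp, hvalue⟩
  have hx : IsBounded (range x) := (h.quasiFejer hG hf').isBounded_range ⟨z, hz⟩
  have hJ : IsBounded (range J) :=
    h.isBounded_range_prox hG hx (hA _ (range_subset_iff.2 h.mem) hx).2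
  obtain ⟨A, hAD, hAc, hAb, hxA, hJA⟩ := h.exists_convex_isBounded_superset hG.1 hx hJ
  have hf'A := (hA A hAD hAb).1
  have hxJ := h.tendsto_norm_sub_prox hG hf' hθ hb hAc hAb hf'A hxA hJA
  have hf'xJ :=
    tendsto_norm_sub_of_uniformContinuousOn hf'A (.of_forall hxA) (.of_forall hJA) hxJ
  refine ⟨J, fun k => (h.isProxOn k).1, ?_, h.tendsto_value_prox hG hf' hz hJ hxJ hf'xJ⟩
  rw [tendsto_zero_iff_norm_tendsto_zero]
  simpa only [norm_sub_rev] using hxJ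

end IsForwardBackward

lemma mem_minimizersOn_of_tendstoWeakly [CompleteSpace E] {ι : Type*} {l : Filter ι} [l.NeBot]
    {φ : E → ℝ} {D : Set E} {u : ι → E} {p z : E} (hφ : ConvexOn ℝ D φ)
    (hcl : ∀ c, IsClosed {y | y ∈ D ∧ φ y ≤ c}) (hu : TendstoWeakly u l p) (huD : ∀ k, u k ∈ D)
    (hz : z ∈ minimizersOn φ D) (hlim : Tendsto (fun k => φ (u k)) l (𝓝 (φ z))) :
    p ∈ minimizersOn φ D := by
  have hmem : ∀ c > φ z, p ∈ {y | y ∈ D ∧ φ y ≤ c} := fun c hc =>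
    hu.mem_of_isClosed_of_convex (hφ.convex_le c) (hcl c)
      ((hlim.eventually_le_const hc).mono fun k hk => ⟨huD k, hk⟩)
  have hpz : φ p ≤ φ z := le_of_forall_gt_imp_ge_of_dense fun c hc => (hmem c hc).2
  exact ⟨(hmem _ (lt_add_one _)).1, fun y hy => hpz.trans (hz.2 hy)⟩

lemma IsForwardBackward.exists_tendstoWeakly [CompleteSpace E] {F G : E → ℝ} {f' : E → E}
    {D : Set E} {θ : ℝ} {x J : ℕ → E} {b : ℕ → ℝ} (h : IsForwardBackward F G f' D θ x J b)
    (hG : ConvexOn ℝ D G) (hf' : IsSubgradientOn F f' D) (hθ : 0 < θ)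
    (hA : ∀ A ⊆ D, IsBounded A → UniformContinuousOn f' A ∧ IsBounded (f' '' A))
    (hcl : ∀ c, IsClosed {y | y ∈ D ∧ F y + G y ≤ c})
    (hS : (minimizersOn (fun y => F y + G y) D).Nonempty) :
    ∃ p ∈ minimizersOn (fun y => F y + G y) D, TendstoWeakly x atTop p := by
  obtain ⟨z, hz⟩ := hS
  refine exists_tendstoWeakly_of_tendsto_norm_sub ⟨z, hz⟩
    (fun z hz => (h.quasiFejer hG hf').exists_tendsto_norm_sub hz) fun U hU p hp => ?_
  obtain ⟨u, huD, hux, hu⟩ := h.exists_minimizing_of_tendsto_sub hG hf' hθ hA hz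
  exact mem_minimizersOn_of_tendstoWeakly ((hf'.convexOn hG.1).add hG) hcl
    (hp.of_tendsto_sub (hux.mono_left hU)) huD hz (hu.mono_left hU)

end ForwardBackwardSequence

section ExtendedReal

variable {E : Type*} {f g : E → EReal}

lemma coe_toReal_of_mem_edom (hg : ∀ y, g y ≠ ⊥) {y : E} (hy : y ∈ edom g) :
    ((g y).toReal : EReal) = g y := EReal.coe_toReal hy.ne (hg y)

lemma coe_toReal_add_toReal_of_mem_edom (hf : ∀ y, f y ≠ ⊥) (hg : ∀ y, g y ≠ ⊥)
    (hdom : edom g ⊆ edom f) {y : E} (hy : y ∈ edom g) :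
    (((f y).toReal + (g y).toReal : ℝ) : EReal) = f y + g y := by
  rw [EReal.coe_add, coe_toReal_of_mem_edom hf (hdom hy), coe_toReal_of_mem_edom hg hy]

lemma add_eq_top_of_notMem_edom (hf : ∀ y, f y ≠ ⊥) {y : E} (hy : y ∉ edom g) :
    f y + g y = ⊤ := by
  rw [show g y = ⊤ from not_lt_top_iff.1 hy, EReal.add_top_of_ne_bot (hf y)]

lemma argminSet_eq_minimizersOn (hf : ∀ y, f y ≠ ⊥) (hg : ∀ y, g y ≠ ⊥)
    (hdom : edom g ⊆ edom f) (hne : (edom g).Nonempty) :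
    argminSet f g = minimizersOn (fun y => (f y).toReal + (g y).toReal) (edom g) := by
  have hcoe {y : E} (hy : y ∈ edom g) := coe_toReal_add_toReal_of_mem_edom hf hg hdom hy
  ext z
  constructor
  · intro hz
    obtain ⟨y₀, hy₀⟩ := hne
    have hzD : z ∈ edom g := by
      by_contra hzD
      have hle := hz y₀
      rw [add_eq_top_of_notMem_edom hf hzD, ← hcoe hy₀] at hle
      exact (EReal.coe_lt_top _).not_ge hle
    refine ⟨hzD, fun y hy => ?_⟩
    have hle := hz y
    rwa [← hcoe hzD, ← hcoe hy, EReal.coe_le_coe_iff] at hle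
  · rintro ⟨hzD, hz⟩ y
    by_cases hy : y ∈ edom g
    · rw [← hcoe hzD, ← hcoe hy, EReal.coe_le_coe_iff]
      exact hz hy
    · exact add_eq_top_of_notMem_edom hf hy ▸ le_top

lemma IsProxPt.isProxOn [NormedAddCommGroup E] {w p : E} (h : IsProxPt g 1 w p)
    (hg : ∀ y, g y ≠ ⊥) (hne : (edom g).Nonempty) :
    IsProxOn (fun y => (g y).toReal) (edom g) w p := by
  have hcoe {y : E} (hy : y ∈ edom g) := coe_toReal_of_mem_edom hg hy
  obtain ⟨y₀, hy₀⟩ := hne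
  have hpD : p ∈ edom g := by
    by_contra hpD
    have hle := h y₀
    rw [show g p = ⊤ from not_lt_top_iff.1 hpD, EReal.top_add_coe, ← hcoe hy₀,
      ← EReal.coe_add] at hle
    exact (EReal.coe_lt_top _).not_ge hle
  refine ⟨hpD, fun y hy => ?_⟩
  have hle := h y
  rw [← hcoe hpD, ← hcoe hy, ← EReal.coe_add, ← EReal.coe_add, EReal.coe_le_coe_iff] at hle
  simpa only [mul_one, mem_ofPred_eq] using hle

lemma isClosed_setOf_mem_edom_and_toReal_add_le [TopologicalSpace E] (hg : ∀ y, g y ≠ ⊥)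
    (hlsc : LowerSemicontinuous g) {q : E → ℝ} (hq : Continuous q) (c : ℝ) :
    IsClosed {y | y ∈ edom g ∧ q y + (g y).toReal ≤ c} := by
  have hsum : LowerSemicontinuous fun y => (q y : EReal) + g y :=
    (continuous_coe_real_ereal.comp hq).lowerSemicontinuous.add' hlsc fun y =>
      EReal.continuousAt_add (.inl (EReal.coe_ne_top _)) (.inl (EReal.coe_ne_bot _))
  convert hsum.isClosed_preimage (c : EReal) using 1
  ext y
  by_cases hy : y ∈ edom g
  · simp only [mem_ofPred_eq, mem_preimage, mem_Iic, hy, true_and]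
    rw [← coe_toReal_of_mem_edom hg hy, ← EReal.coe_add, EReal.coe_le_coe_iff, EReal.toReal_coe]
  · have htop := add_eq_top_of_notMem_edom (f := fun y => (q y : EReal))
      (fun y => EReal.coe_ne_bot _) hy
    simp [hy, htop]

variable [NormedAddCommGroup E] [InnerProductSpace ℝ E]

-- `F` is the supremum on `edom g` of its affine minorants, so the sublevel sets of `F + g` are
-- intersections of sublevel sets of continuous perturbations of `g`.
lemma IsSubgradientOn.isClosed_setOf_mem_edom_and_add_toReal_le {F : E → ℝ} {f' : E → E}
    (hf' : IsSubgradientOn F f' (edom g)) (hg : ∀ y, g y ≠ ⊥) (hlsc : LowerSemicontinuous g)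
    (hne : (edom g).Nonempty) (c : ℝ) :
    IsClosed {y | y ∈ edom g ∧ F y + (g y).toReal ≤ c} := by
  have hinter : {y | y ∈ edom g ∧ F y + (g y).toReal ≤ c} =
      ⋂ x ∈ edom g, {y | y ∈ edom g ∧ F x + ⟪f' x, y - x⟫ + (g y).toReal ≤ c} := by
    ext y
    simp only [mem_iInter₂]
    constructor
    · rintro ⟨hy, hle⟩ x hx
      exact ⟨hy, (add_le_add_left (hf' x hx y hy) _).trans hle⟩
    · intro h
      obtain ⟨x₀, hx₀⟩ := hne
      have hy := (h x₀ hx₀).1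
      exact ⟨hy, by simpa using (h y hy).2⟩
  rw [hinter]
  exact isClosed_biInter fun x _ =>
    isClosed_setOf_mem_edom_and_toReal_add_le hg hlsc (by fun_prop) c

lemma ls2Ineq_iff_acceptsStep (hf : ∀ y, f y ≠ ⊥) (hg : ∀ y, g y ≠ ⊥) (hdom : edom g ⊆ edom f)
    {f' : E → E} {x J : E} {β : ℝ} (hx : x ∈ edom g) (hJ : J ∈ edom g)
    (hβ : x - β • (x - J) ∈ edom g) :
    LS2Ineq f g f' x J β ↔
      AcceptsStep (fun y => (f y).toReal) (fun y => (g y).toReal) f' x J β := by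
  rw [LS2Ineq, AcceptsStep, ← coe_toReal_add_toReal_of_mem_edom hf hg hdom hβ,
    ← coe_toReal_add_toReal_of_mem_edom hf hg hdom hx, ← coe_toReal_of_mem_edom hg hx,
    ← coe_toReal_of_mem_edom hg hJ]
  norm_cast

namespace ProperLscConvex

lemma nonempty_edom (hg : ProperLscConvex g) : (edom g).Nonempty := hg.1

lemma ne_bot (hg : ProperLscConvex g) (y : E) : g y ≠ ⊥ := (hg.2.1 y).ne'

lemma lowerSemicontinuous (hg : ProperLscConvex g) : LowerSemicontinuous g := hg.2.2.1

lemma map_smul_add_smul_le (hg : ProperLscConvex g) {y z : E} (hy : y ∈ edom g) (hz : z ∈ edom g)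
    {a b : ℝ} (ha : 0 ≤ a) (hb : 0 ≤ b) (hab : a + b = 1) :
    g (a • y + b • z) ≤ ((a * (g y).toReal + b * (g z).toReal : ℝ) : EReal) := by
  rw [EReal.coe_add, EReal.coe_mul, EReal.coe_mul, coe_toReal_of_mem_edom hg.ne_bot hy,
    coe_toReal_of_mem_edom hg.ne_bot hz]
  exact hg.2.2.2 y z a b ha hb hab

lemma convexOn_toReal (hg : ProperLscConvex g) : ConvexOn ℝ (edom g) fun y => (g y).toReal := by
  have hconvex : Convex ℝ (edom g) := fun y hy z hz a b ha hb hab =>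
    (hg.map_smul_add_smul_le hy hz ha hb hab).trans_lt (EReal.coe_lt_top _)
  refine ⟨hconvex, fun y hy z hz a b ha hb hab => EReal.coe_le_coe_iff.1 ?_⟩
  rw [coe_toReal_of_mem_edom hg.ne_bot (hconvex hy hz ha hb hab)]
  exact hg.map_smul_add_smul_le hy hz ha hb hab

end ProperLscConvex

lemma GradOnOpenSupset.hasGradientWithinAt [CompleteSpace E] {f' : E → E} {D : Set E}
    (h : GradOnOpenSupset f f' D) :
    ∀ y ∈ D, HasGradientWithinAt (fun z => (f z).toReal) (f' y) D y := by
  obtain ⟨U, -, hDU, hU⟩ := h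
  exact fun y hy => (hU y (hDU hy)).2.hasFDerivAt.hasFDerivWithinAt

lemma isForwardBackward_toReal (hf : ∀ y, f y ≠ ⊥) (hg : ProperLscConvex g)
    (hdom : edom g ⊆ edom f) {f' : E → E} {θ : ℝ} (hθ : θ ∈ Ioo (0 : ℝ) 1) {x J : ℕ → E}
    {b : ℕ → ℝ} (hx₀ : x 0 ∈ edom g) (hJ : ∀ k, IsProxPt g 1 (x k - f' (x k)) (J k))
    (hls : ∀ k, ∃ n : ℕ, b k = θ ^ n ∧ LS2Ineq f g f' (x k) (J k) (b k) ∧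
      ∀ m : ℕ, m < n → ¬LS2Ineq f g f' (x k) (J k) (θ ^ m))
    (hiter : ∀ k, x (k + 1) = x k - b k • (x k - J k)) :
    IsForwardBackward (fun y => (f y).toReal) (fun y => (g y).toReal) f' (edom g) θ x J b := by
  have hpow (n : ℕ) : 0 < θ ^ n ∧ θ ^ n ≤ 1 := ⟨pow_pos hθ.1 n, pow_le_one₀ hθ.1.le hθ.2.le⟩
  have hb (k : ℕ) : 0 < b k ∧ b k ≤ 1 := by
    obtain ⟨n, hn, -⟩ := hls k
    exact hn ▸ hpow n
  have hprox (k : ℕ) := (hJ k).isProxOn hg.ne_bot hg.nonempty_edom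
  have hstep {k : ℕ} {β : ℝ} (hx : x k ∈ edom g) (hβ : 0 < β ∧ β ≤ 1) :
      x k - β • (x k - J k) ∈ edom g :=
    sub_smul_sub_mem_of_convex hg.convexOn_toReal.1 hx (hprox k).1 ⟨hβ.1.le, hβ.2⟩
  have hx (k : ℕ) : x k ∈ edom g := by
    induction k with
    | zero => exact hx₀
    | succ k ih => exact hiter k ▸ hstep ih (hb k)
  have haccepts {k : ℕ} {β : ℝ} (hβ : 0 < β ∧ β ≤ 1) :=
    ls2Ineq_iff_acceptsStep hf hg.ne_bot hdom (f' := f') (hx k) (hprox k).1 (hstep (hx k) hβ)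
  refine ⟨hx, hprox, fun k => (hb k).1, fun k => (hb k).2, fun k => ?_, fun k hbk => ?_, hiter⟩
  · obtain ⟨n, -, hacc, -⟩ := hls k
    exact (haccepts (hb k)).1 hacc
  · obtain ⟨_ | n, hn, -, hrej⟩ := hls k
    · exact absurd hn (by simpa using hbk.ne)
    · have hprev : b k / θ = θ ^ n := by rw [hn, pow_succ, mul_div_cancel_right₀ _ hθ.1.ne']
      rw [hprev]
      exact ⟨(hpow n).2, fun hacc => hrej n n.lt_succ_self ((haccepts (hpow n)).2 hacc)⟩

end ExtendedReal

theorem stmt18_general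
    (f g : H → EReal) (f' : H → H)
    (hf : ∀ y, f y ≠ ⊥) (hg : ProperLscConvex g)
    (hdom : edom g ⊆ edom f)
    (hconv : ConvexOn ℝ (edom g) fun y => (f y).toReal)
    (hdiff : ∀ y ∈ edom g, HasGradientWithinAt (fun z => (f z).toReal) (f' y) (edom g) y)
    (hA2 : UCBddOnBounded g f')
    (θ : ℝ) (hθ : θ ∈ Ioo (0 : ℝ) 1)
    (x J : ℕ → H) (b : ℕ → ℝ)
    (hx₀ : x 0 ∈ edom g)
    (hJ : ∀ k, IsProxPt g 1 (x k - f' (x k)) (J k))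
    (hls : ∀ k, ∃ n : ℕ, b k = θ ^ n ∧ LS2Ineq f g f' (x k) (J k) (b k) ∧
      ∀ m : ℕ, m < n → ¬LS2Ineq f g f' (x k) (J k) (θ ^ m))
    (hiter : ∀ k, x (k + 1) = x k - b k • (x k - J k))
    (hS : (argminSet f g).Nonempty) :
    QuasiFejer (argminSet f g) x ∧ ∃ p ∈ argminSet f g, TendstoWeakly x atTop p := by
  have hsub := isSubgradientOn_of_hasGradientWithinAt hconv hdiff
  have hcl := hsub.isClosed_setOf_mem_edom_and_add_toReal_le hg.ne_bot hg.lowerSemicontinuous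
    hg.nonempty_edom
  have hfb := isForwardBackward_toReal hf hg hdom hθ hx₀ hJ hls hiter
  rw [argminSet_eq_minimizersOn hf hg.ne_bot hdom hg.nonempty_edom] at hS ⊢
  exact ⟨hfb.quasiFejer hg.convexOn_toReal hsub,
    hfb.exists_tendstoWeakly hg.convexOn_toReal hsub hθ.1 hA2 hcl hS⟩

/-- Theorem 5.1(i): under Assumptions A1–A2, if `S⁎ ≠ ∅` then the
sequence generated by Method 3 (forward-backward with Linesearch 2) is quasi-Fejér
convergent to `S⁎` and converges weakly to a point of `S⁎`. -/
theorem stmt18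
    (f g : H → EReal) (f' : H → H)
    (hf : ProperLscConvex f) (hg : ProperLscConvex g)
    (hdom : edom g ⊆ edom f)
    (hdiff : GradOnOpenSupset f f' (edom g))
    (hA2 : UCBddOnBounded g f')
    (θ : ℝ) (hθ : θ ∈ Set.Ioo (0 : ℝ) 1)
    (x Jseq : ℕ → H) (b : ℕ → ℝ)
    (hx0 : x 0 ∈ edom g)
    (hJ : ∀ k : ℕ, IsProxPt g 1 (x k - f' (x k)) (Jseq k))
    (hls : ∀ k : ℕ, ∃ n : ℕ, b k = θ ^ n ∧
      LS2Ineq f g f' (x k) (Jseq k) (b k) ∧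
      ∀ m : ℕ, m < n → ¬ LS2Ineq f g f' (x k) (Jseq k) (θ ^ m))
    (hiter : ∀ k : ℕ, x (k + 1) = x k - b k • (x k - Jseq k))
    (hS : (argminSet f g).Nonempty) :
    (∀ z ∈ argminSet f g, ∃ ε : ℕ → ℝ, (∀ k, 0 ≤ ε k) ∧ Summable ε ∧
        ∀ k : ℕ, ‖x (k + 1) - z‖ ^ 2 ≤ ‖x k - z‖ ^ 2 + ε k) ∧
      ∃ p ∈ argminSet f g, ∀ y : H, Tendsto (fun k => ⟪x k, y⟫) atTop (nhds ⟪p, y⟫) := by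
  exact stmt18_general f g f' hf.ne_bot hg hdom
    (hf.convexOn_toReal.subset hdom hg.convexOn_toReal.1) hdiff.hasGradientWithinAt hA2 θ hθ x
    Jseq b hx0 hJ hls hiter hS
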